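/- arXiv:2103.04587 — 3 statements merged into one kernel-verified Lean document; each statement's English description precedes it below -/
import Mathlib

section
/- Fix real numbers λ₁ < λ₂ < … < λ_m and let Λ = diag(λ₁,…,λ_m). For each n ∈ ℕ let A_n be a real symmetric m×m matrix with spectrum {λ₁,…,λ_m}, and let U_n be a real orthogonal m×m matrix with nonnegative diagonal entries satisfying U_nᵀ A_n U_n = Λ. If A_n → Λ as n → ∞, then U_n → I_m as n → ∞. -/
open Matrix Filter

/-- `A ∈ S(G)`: real symmetric matrix whose off-diagonal zero pattern is given by `G`. -/
def inS {V : Type*} (G : SimpleGraph V) (A : Matrix V V ℝ) : Prop :=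
  A.IsSymm ∧ ∀ i j : V, i ≠ j → (A i j ≠ 0 ↔ G.Adj i j)

/-- The spectrum of a matrix, as the multiset of roots of its characteristic polynomial. -/
noncomputable def specMultiset {V : Type*} [Fintype V] [DecidableEq V]
    (A : Matrix V V ℝ) : Multiset ℝ :=
  A.charpoly.roots

/-- The number of distinct eigenvalues of a matrix. -/
noncomputable def qMat {V : Type*} [Fintype V] [DecidableEq V] (A : Matrix V V ℝ) : ℕ :=
  (specMultiset A).toFinset.card

/-- `q(G)`: the minimum number of distinct eigenvalues over matrices in `S(G)`. -/
noncomputable def qGraph {V : Type*} [Fintype V] [DecidableEq V] (G : SimpleGraph V) : ℕ :=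
  sInf {q | ∃ A : Matrix V V ℝ, inS G A ∧ qMat A = q}

/-- The strong spectral property. -/
def HasSSP {V : Type*} [Fintype V] [DecidableEq V] (A : Matrix V V ℝ) : Prop :=
  ∀ X : Matrix V V ℝ, X.IsSymm → A * X = X * A →
    Matrix.hadamard A X = 0 → Matrix.hadamard (1 : Matrix V V ℝ) X = 0 → X = 0

/-- Generic realisability of a multiset of eigenvalues for a graph. -/
def GenericallyRealisable {V : Type*} [Fintype V] [DecidableEq V]
    (G : SimpleGraph V) (σ : Multiset ℝ) : Prop :=
  ∀ Y : Finset (V → ℝ), (∀ y ∈ Y, y ≠ 0) →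
    ∃ (d : V → ℝ) (U : Matrix V V ℝ),
      Multiset.map d Finset.univ.val = σ ∧ Uᵀ * U = 1 ∧
      inS G (U * Matrix.diagonal d * Uᵀ) ∧
      ∀ y ∈ Y, ∀ i, U.mulVec y i ≠ 0

/-- The partial join `(G₁, X) ∨ G₂`: the disjoint union of `G₁` and `G₂` together with all
edges joining vertices of `X ⊆ V(G₁)` to vertices of `G₂`. -/
def partialJoin {α β : Type*} (G₁ : SimpleGraph α) (X : Set α) (G₂ : SimpleGraph β) :
    SimpleGraph (α ⊕ β) where
  Adj x y :=
    (∃ a b, G₁.Adj a b ∧ x = Sum.inl a ∧ y = Sum.inl b) ∨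
    (∃ a b, G₂.Adj a b ∧ x = Sum.inr a ∧ y = Sum.inr b) ∨
    (∃ a ∈ X, ∃ b, x = Sum.inl a ∧ y = Sum.inr b) ∨
    (∃ a ∈ X, ∃ b, x = Sum.inr b ∧ y = Sum.inl a)
  symm := by
    constructor
    rintro x y (⟨a, b, hab, rfl, rfl⟩ | ⟨a, b, hab, rfl, rfl⟩ | ⟨a, ha, b, rfl, rfl⟩ |
      ⟨a, ha, b, rfl, rfl⟩)
    · exact Or.inl ⟨b, a, hab.symm, rfl, rfl⟩
    · exact Or.inr (Or.inl ⟨b, a, hab.symm, rfl, rfl⟩)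
    · exact Or.inr (Or.inr (Or.inr ⟨a, ha, b, rfl, rfl⟩))
    · exact Or.inr (Or.inr (Or.inl ⟨a, ha, b, rfl, rfl⟩))
  loopless := by
    constructor
    rintro x (⟨a, b, hab, rfl, h⟩ | ⟨a, b, hab, rfl, h⟩ | ⟨a, ha, b, rfl, h⟩ | ⟨a, ha, b, rfl, h⟩)
    · cases h; exact hab.ne rfl
    · cases h; exact hab.ne rfl
    · exact (Sum.inl_ne_inr h).elim
    · exact (Sum.inr_ne_inl h).elim

/-- The join `G₁ ∨ G₂` of two graphs. -/
def graphJoin {α β : Type*} (G₁ : SimpleGraph α) (G₂ : SimpleGraph β) : SimpleGraph (α ⊕ β) :=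
  partialJoin G₁ Set.univ G₂

/-- The disjoint union of a family of graphs. -/
def sigmaGraph {ι : Type*} {α : ι → Type*} (G : ∀ i, SimpleGraph (α i)) :
    SimpleGraph (Σ i, α i) where
  Adj x y := ∃ (i : ι) (a b : α i), (G i).Adj a b ∧ x = ⟨i, a⟩ ∧ y = ⟨i, b⟩
  symm := by
    constructor
    rintro x y ⟨i, a, b, hab, rfl, rfl⟩
    exact ⟨i, b, a, hab.symm, rfl, rfl⟩
  loopless := by
    constructor
    rintro x ⟨i, a, b, hab, rfl, h⟩
    obtain rfl : a = b := by simpa using h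
    exact hab.ne rfl

/-!
If `u` is unitary then `b u - u c = u (u* a u - c) - (a - b) u`, so `a → b` and `u* a u → c` force
`b u - u c → 0`. For `b = c = diag(d)` the `(i, j)` entry of this matrix is `(d i - d j) u i j`;
since the `d i` are distinct, the off-diagonal entries of `u` tend to `0`. As the columns of `u`
are unit vectors, its diagonal entries tend to `1` in absolute value, and they are nonnegative.
-/

section Unitary

variable {R : Type*} [NormedRing R] [StarRing R] [CStarRing R]

theorem norm_mul_sub_mul_le_of_mem_unitary (a b c : R) {u : R} (hu : u ∈ unitary R) :
    ‖b * u - u * c‖ ≤ ‖star u * a * u - c‖ + ‖a - b‖ := by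
  have hdecomp : b * u - u * c = u * (star u * a * u - c) - (a - b) * u := by
    rw [mul_sub, ← mul_assoc, ← mul_assoc, Unitary.mul_star_self_of_mem hu, one_mul, sub_mul]
    abel
  calc ‖b * u - u * c‖ = ‖u * (star u * a * u - c) - (a - b) * u‖ := by rw [hdecomp]
    _ ≤ ‖u * (star u * a * u - c)‖ + ‖(a - b) * u‖ := norm_sub_le _ _
    _ = ‖star u * a * u - c‖ + ‖a - b‖ := by
      rw [CStarRing.norm_mem_unitary_mul _ hu, CStarRing.norm_mul_mem_unitary _ hu]

theorem tendsto_mul_sub_mul_of_tendsto_unitary_conj {α : Type*} {l : Filter α} {a u : α → R}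
    {b c : R} (hu : ∀ x, u x ∈ unitary R) (ha : Tendsto a l (nhds b))
    (hconj : Tendsto (fun x => star (u x) * a x * u x) l (nhds c)) :
    Tendsto (fun x => b * u x - u x * c) l (nhds 0) := by
  refine squeeze_zero_norm (fun x => norm_mul_sub_mul_le_of_mem_unitary (a x) b c (hu x)) ?_
  simpa only [add_zero] using
    (tendsto_iff_norm_sub_tendsto_zero.1 hconj).add (tendsto_iff_norm_sub_tendsto_zero.1 ha)

end Unitary

section Entries

variable {α ι : Type*} {l : Filter α} [Fintype ι]

theorem tendsto_norm_apply_one_of_sum_norm_sq_eq_one {E : ι → Type*}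
    [∀ k, SeminormedAddCommGroup (E k)] {v : α → ∀ k, E k} {i : ι}
    (hv : ∀ x, ∑ k, ‖v x k‖ ^ 2 = 1)
    (hzero : ∀ k, k ≠ i → Tendsto (fun x => v x k) l (nhds 0)) :
    Tendsto (fun x => ‖v x i‖) l (nhds 1) := by
  classical
  have hrest : Tendsto (fun x => ∑ k ∈ Finset.univ.erase i, ‖v x k‖ ^ 2) l (nhds 0) := by
    simpa using tendsto_finsetSum (Finset.univ.erase i)
      fun k hk => (hzero k (Finset.ne_of_mem_erase hk)).norm.pow 2
  have hnorm_eq (x : α) : √(1 - ∑ k ∈ Finset.univ.erase i, ‖v x k‖ ^ 2) = ‖v x i‖ := by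
    rw [← hv x, ← Finset.add_sum_erase _ _ (Finset.mem_univ i), add_sub_cancel_right,
      Real.sqrt_sq (norm_nonneg _)]
  simpa only [hnorm_eq, sub_zero, Real.sqrt_one] using (hrest.const_sub 1).sqrt

variable [DecidableEq ι]

theorem diagonal_mul_sub_mul_diagonal_apply {R : Type*} [CommRing R] (d : ι → R)
    (M : Matrix ι ι R) (i j : ι) :
    (diagonal d * M - M * diagonal d) i j = (d i - d j) * M i j := by
  rw [Matrix.sub_apply, diagonal_mul, mul_diagonal]
  ring

theorem tendsto_apply_zero_of_tendsto_commutator_diagonal {K : Type*} [Field K]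
    [TopologicalSpace K] [ContinuousMul K] {d : ι → K} (hd : Function.Injective d)
    {M : α → Matrix ι ι K}
    (hM : Tendsto (fun x => diagonal d * M x - M x * diagonal d) l (nhds 0))
    {i j : ι} (hij : i ≠ j) : Tendsto (fun x => M x i j) l (nhds 0) := by
  have hne : d i - d j ≠ 0 := sub_ne_zero.2 (hd.ne hij)
  have hentry : Tendsto (fun x => (d i - d j) * M x i j) l (nhds 0) := by
    simpa only [diagonal_mul_sub_mul_diagonal_apply, Matrix.zero_apply] using
      tendsto_pi_nhds.1 (tendsto_pi_nhds.1 hM i) j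
  simpa only [inv_mul_cancel_left₀ hne, mul_zero] using hentry.const_mul (d i - d j)⁻¹

variable {𝕜 : Type*} [RCLike 𝕜]

theorem sum_norm_sq_col_eq_one {U : Matrix ι ι 𝕜} (hU : U ∈ unitaryGroup ι 𝕜) (j : ι) :
    ∑ i, ‖U i j‖ ^ 2 = 1 := by
  have hjj : (star U * U) j j = 1 := by rw [mem_unitaryGroup_iff'.1 hU, one_apply_eq]
  simp only [mul_apply, star_apply, RCLike.star_def, RCLike.conj_mul] at hjj
  exact_mod_cast hjj

open scoped ComplexOrder

theorem tendsto_one_of_unitary_of_tendsto_offDiag_zero {U : α → Matrix ι ι 𝕜}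
    (hU : ∀ x, U x ∈ unitaryGroup ι 𝕜) (hdiag : ∀ x i, 0 ≤ U x i i)
    (hoff : ∀ i j, i ≠ j → Tendsto (fun x => U x i j) l (nhds 0)) :
    Tendsto U l (nhds 1) := by
  refine tendsto_pi_nhds.2 fun i => tendsto_pi_nhds.2 fun j => ?_
  obtain rfl | hij := eq_or_ne i j
  · have hnorm : Tendsto (fun x => ‖U x i i‖) l (nhds 1) :=
      tendsto_norm_apply_one_of_sum_norm_sq_eq_one (v := fun x k => U x k i)
        (fun x => sum_norm_sq_col_eq_one (hU x) i) fun k => hoff k i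
    simpa only [Function.comp_def, RCLike.norm_of_nonneg' (hdiag _ i), RCLike.ofReal_one,
      one_apply_eq] using ((RCLike.continuous_ofReal (K := 𝕜)).tendsto 1).comp hnorm
  · rw [one_apply_ne hij]
    exact hoff i j hij

theorem statement1_general {d : ι → 𝕜} (hd : Function.Injective d) {A U : α → Matrix ι ι 𝕜}
    (hU : ∀ x, U x ∈ unitaryGroup ι 𝕜) (hdiag : ∀ x i, 0 ≤ U x i i)
    (hA : Tendsto A l (nhds (diagonal d)))
    (hconj : Tendsto (fun x => star (U x) * A x * U x) l (nhds (diagonal d))) :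
    Tendsto U l (nhds 1) := by
  have hcomm : Tendsto (fun x => diagonal d * U x - U x * diagonal d) l (nhds 0) := by
    open scoped Matrix.Norms.L2Operator in
    exact tendsto_mul_sub_mul_of_tendsto_unitary_conj hU hA hconj
  exact tendsto_one_of_unitary_of_tendsto_offDiag_zero hU hdiag fun _ _ =>
    tendsto_apply_zero_of_tendsto_commutator_diagonal hd hcomm

end Entries

/-- Lemma 2.2: if `A_n ∈ 𝓔_Λ` with `A_n → Λ` and `U_n` orthogonal with
nonnegative diagonal and `U_nᵀ A_n U_n = Λ`, then `U_n → I`. -/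
theorem statement1 (m : ℕ) (lam : Fin m → ℝ) (hlam : StrictMono lam)
    (A U : ℕ → Matrix (Fin m) (Fin m) ℝ)
    (hAsymm : ∀ n, (A n).IsSymm)
    (hAspec : ∀ n, specMultiset (A n) = Finset.univ.val.map lam)
    (hUorth : ∀ n, (U n)ᵀ * U n = 1)
    (hUdiag : ∀ n, ∀ i, 0 ≤ U n i i)
    (hUA : ∀ n, (U n)ᵀ * A n * U n = Matrix.diagonal lam)
    (hA : Tendsto A atTop (nhds (Matrix.diagonal lam))) :
    Tendsto U atTop (nhds 1) :=
  statement1_general hlam.injective (fun n => (mem_orthogonalGroup_iff' _ _).2 (hUorth n)) hUdiag hA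
    (tendsto_const_nhds.congr fun n => (hUA n).symm)
end

section
/- Let G be a connected simple graph on vertex set {1,…,m}, let λ₁ < λ₂ < … < λ_m be real numbers with Λ = diag(λ₁,…,λ_m), and let Y be a finite subset of ℝ^m ∖ {0}. Then there exist a real symmetric matrix A ∈ S(G) with spectrum {λ₁,…,λ_m} having the strong spectral property (SSP), and an orthogonal matrix U with Uᵀ A U = Λ, such that the vector U v is nowhere-zero for every v ∈ Y. -/
open Matrix Filter

/-! Write `Λ = diagonal lam` and look for `A = U * Λ * Uᵀ` with `U` orthogonal and close to `1`. The
map `Ψ U = Uᵀ * U + ⁅Λ, U * Λ * Uᵀ⁆` records the orthogonality of `U` in its symmetric part and, the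
`lam i` being distinct, the off-diagonal entries of `U * Λ * Uᵀ` in its skew-symmetric part. Its
derivative at `1` is injective, so by the analytic inverse function theorem a matrix `U` for which
`A` has prescribed small edge weights `w` on `G`, and zeros off the edges, can be chosen
analytically in `w`.

Each entry `(U w *ᵥ y) i` with `y ≠ 0` is thus analytic in `w`, and it does not vanish identically
near `0`: put the weights on a path from `i` to a nearest vertex `j` of the support of `y`. The
vertices off the path are isolated, so the entry equals `U i j * y j`, and `U i j ≠ 0` because an
eigenvector of a path that vanishes at one end vanishes at the other one, whereas `U j j` is close
to `1`. Finitely many nonzero analytic germs, the weights among them, are simultaneously nonzero at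
points arbitrarily close to `0`.

As for the SSP, a matrix that commutes with `A` is `U * diagonal z * Uᵀ`, whose diagonal is
`(U ⊙ U) *ᵥ z`, and `U ⊙ U` is invertible for `U` close to `1`. -/

section LocalAnalysis

open scoped Topology

theorem exists_analyticAt_rightInverse {𝕜 E F : Type*} [NontriviallyNormedField 𝕜]
    [CompleteSpace 𝕜] [NormedAddCommGroup E] [NormedSpace 𝕜 E] [FiniteDimensional 𝕜 E]
    [NormedAddCommGroup F] [NormedSpace 𝕜 F] [FiniteDimensional 𝕜 F]
    (hEF : Module.finrank 𝕜 E = Module.finrank 𝕜 F) {f : E → F} {a : E}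
    (hf : AnalyticAt 𝕜 f a) (hinj : Function.Injective (fderiv 𝕜 f a)) :
    ∃ g : F → E, AnalyticAt 𝕜 g (f a) ∧ g (f a) = a ∧ ∀ᶠ y in 𝓝 (f a), f (g y) = y := by
  have := FiniteDimensional.complete 𝕜 E
  let f' : E ≃L[𝕜] F :=
    (LinearEquiv.ofInjectiveOfFinrankEq (fderiv 𝕜 f a).toLinearMap hinj hEF).toContinuousLinearEquiv
  have hf' : fderiv 𝕜 f a = f' := by ext; rfl
  have hstrict : HasStrictFDerivAt f (f' : E →L[𝕜] F) a := hf' ▸ hf.hasStrictFDerivAt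
  exact ⟨hstrict.localInverse f f' a,
    (hstrict.toOpenPartialHomeomorph f).analyticAt_symm'
      hstrict.mem_toOpenPartialHomeomorph_source hf hf',
    hstrict.localInverse_apply_image, hstrict.eventually_right_inverse⟩

theorem frequently_nhds_zero_of_forall_smul {E : Type*} [AddCommGroup E] [Module ℝ E]
    [TopologicalSpace E] [ContinuousSMul ℝ E] {P Q : E → Prop} (u : E) (hQ : ∀ᶠ w in 𝓝 0, Q w)
    (h : ∀ t : ℝ, t ≠ 0 → Q (t • u) → P (t • u)) : ∃ᶠ w in 𝓝 0, P w := by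
  have hline : Tendsto (fun t : ℝ => t • u) (𝓝[≠] 0) (𝓝 0) := by
    have : ContinuousAt (fun t : ℝ => t • u) 0 := by fun_prop
    simpa only [ContinuousAt, zero_smul] using this.tendsto.mono_left nhdsWithin_le_nhds
  refine hline.frequently (Eventually.frequently ?_)
  filter_upwards [hline.eventually hQ, self_mem_nhdsWithin] with t hQt ht
  exact h t ht hQt

theorem frequently_apply_ne_zero {ι : Type*} (e : ι) : ∃ᶠ w : ι → ℝ in 𝓝 0, w e ≠ 0 :=
  frequently_nhds_zero_of_forall_smul 1 (.of_forall fun _ => trivial) fun t ht _ => by simpa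

theorem eventually_nhds_one_diag_ne_zero {V : Type*} [Finite V] [DecidableEq V] :
    ∀ᶠ U : Matrix V V ℝ in 𝓝 1, ∀ k, U k k ≠ 0 :=
  eventually_all.2 fun k => (continuous_id.matrix_elem k k).continuousAt.eventually_ne (by simp)

theorem eventually_nhds_one_det_hadamard_ne_zero {V : Type*} [Fintype V] [DecidableEq V] :
    ∀ᶠ U : Matrix V V ℝ in 𝓝 1, (U ⊙ U).det ≠ 0 := by
  have hcont : Continuous fun U : Matrix V V ℝ => (U ⊙ U).det :=
    (continuous_matrix fun i j =>
      (continuous_id.matrix_elem i j).mul (continuous_id.matrix_elem i j)).matrix_det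
  exact hcont.continuousAt.eventually_ne (by simp [hadamard_one])

end LocalAnalysis

section AnalyticGerms

variable {E : Type*} [NormedAddCommGroup E] [NormedSpace ℝ E] {x : E}

open scoped Topology

theorem frequently_mul_ne_zero_of_analyticAt {f g : E → ℝ}
    (hf : AnalyticAt ℝ f x) (hg : AnalyticAt ℝ g x)
    (hf0 : ∃ᶠ y in 𝓝 x, f y ≠ 0) (hg0 : ∃ᶠ y in 𝓝 x, g y ≠ 0) :
    ∃ᶠ y in 𝓝 x, f y * g y ≠ 0 := by
  intro hfg
  simp only [not_not] at hfg
  obtain ⟨r, hr, hball⟩ := Metric.eventually_nhds_iff_ball.1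
    (hfg.and <| hf.eventually_analyticAt.and hg.eventually_analyticAt)
  have hmem : Metric.ball x r ∈ 𝓝 x := Metric.ball_mem_nhds x hr
  obtain ⟨y, hfy, hy⟩ := (hf0.and_eventually hmem).exists
  have hgy : g =ᶠ[𝓝 y] 0 := by
    filter_upwards [(hball y hy).2.1.continuousAt.eventually_ne hfy,
      Metric.isOpen_ball.mem_nhds hy] with z hfz hz
    exact (mul_eq_zero.1 (hball z hz).1).resolve_left hfz
  have hg_ball : Set.EqOn g 0 (Metric.ball x r) :=
    AnalyticOnNhd.eqOn_zero_of_preconnected_of_eventuallyEq_zero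
      (fun z hz => (hball z hz).2.2) (convex_ball x r).isPreconnected hy hgy
  obtain ⟨z, hgz, hz⟩ := (hg0.and_eventually hmem).exists
  exact hgz (hg_ball hz)

theorem frequently_forall_ne_zero_of_analyticAt {ι : Type*} [Finite ι] {f : ι → E → ℝ}
    (hf : ∀ i, AnalyticAt ℝ (f i) x) (hf0 : ∀ i, ∃ᶠ y in 𝓝 x, f i y ≠ 0) :
    ∃ᶠ y in 𝓝 x, ∀ i, f i y ≠ 0 := by
  classical
  have := Fintype.ofFinite ι
  suffices h : ∀ s : Finset ι, ∃ᶠ y in 𝓝 x, ∏ i ∈ s, f i y ≠ 0 by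
    simpa only [Finset.prod_ne_zero_iff, Finset.mem_univ, true_implies] using h Finset.univ
  intro s
  induction s using Finset.induction_on with
  | empty => exact Frequently.of_forall fun _ => by simp
  | insert i s hi ih =>
    simp only [Finset.prod_insert hi]
    exact frequently_mul_ne_zero_of_analyticAt (hf i)
      (Finset.analyticAt_fun_prod s fun j _ => hf j) (hf0 i) ih

open scoped Matrix.Norms.Operator in
theorem analyticAt_mulVec_apply {V : Type*} [Fintype V] {U : E → Matrix V V ℝ}
    (hU : AnalyticAt ℝ U x) (y : V → ℝ) (i : V) :
    AnalyticAt ℝ (fun w => (U w *ᵥ y) i) x :=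
  ((LinearMap.proj i ∘ₗ (mulVecBilin ℝ ℝ).flip y).toContinuousLinearMap.analyticAt _).comp hU

end AnalyticGerms

theorem symm_and_skew_eq_zero_of_add_eq_zero {R n : Type*} [AddCommGroup R] [IsAddTorsionFree R]
    {P K : Matrix n n R} (hP : P.IsSymm) (hK : Kᵀ = -K) (h : P + K = 0) : P = 0 ∧ K = 0 := by
  have hT : P - K = 0 := by
    simpa [hP.eq, hK, sub_eq_add_neg] using congrArg transpose h
  have hPK : P = K := sub_eq_zero.1 hT
  subst hPK
  have hzero : P = 0 := by
    ext i j
    simpa using self_eq_neg.1 (eq_neg_of_add_eq_zero_left (congrFun (congrFun h i) j))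
  exact ⟨hzero, hzero⟩

section Spectral

variable {V : Type*} [Fintype V] [DecidableEq V]

theorem diagonal_lie_apply {R : Type*} [CommRing R] (lam : V → R) (S : Matrix V V R) (i j : V) :
    ⁅diagonal lam, S⁆ i j = (lam i - lam j) * S i j := by
  rw [Ring.lie_def, Matrix.sub_apply, diagonal_mul, mul_diagonal]
  ring

theorem transpose_diagonal_lie {R : Type*} [CommRing R] (lam : V → R) {S : Matrix V V R}
    (hS : S.IsSymm) : ⁅diagonal lam, S⁆ᵀ = -⁅diagonal lam, S⁆ := by
  ext i j
  rw [transpose_apply, neg_apply, diagonal_lie_apply, diagonal_lie_apply, hS.apply]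
  ring

theorem isSymm_conj_diagonal {R : Type*} [CommRing R] (lam : V → R) (U : Matrix V V R) :
    (U * diagonal lam * Uᵀ).IsSymm := by
  simp [IsSymm, Matrix.mul_assoc]

/-- The map `Ψ` to which the inverse function theorem is applied at `1`. Its first summand is
symmetric and its second one skew-symmetric, so a single value of `Ψ` fixes both `Uᵀ * U` and the
off-diagonal part of `U * diagonal lam * Uᵀ`. -/
def spectralMap (lam : V → ℝ) (U : Matrix V V ℝ) : Matrix V V ℝ :=
  Uᵀ * U + ⁅diagonal lam, U * diagonal lam * Uᵀ⁆

theorem spectralMap_one (lam : V → ℝ) : spectralMap lam 1 = 1 := by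
  simp [spectralMap, Ring.lie_def]

theorem orthogonal_and_offDiag_of_spectralMap_eq {lam : V → ℝ} (hlam : Function.Injective lam)
    {E U : Matrix V V ℝ} (hE : E.IsSymm) (h : spectralMap lam U = 1 + ⁅diagonal lam, E⁆) :
    Uᵀ * U = 1 ∧ ∀ i j, i ≠ j → (U * diagonal lam * Uᵀ) i j = E i j := by
  have hS := isSymm_conj_diagonal lam U
  set S := U * diagonal lam * Uᵀ with hSdef
  have hdecomp : (Uᵀ * U - 1) + ⁅diagonal lam, S - E⁆ = 0 := by
    rw [← sub_eq_zero.2 h, spectralMap, ← hSdef]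
    simp only [Ring.lie_def, mul_sub, sub_mul]
    abel
  obtain ⟨horth, hlie⟩ := symm_and_skew_eq_zero_of_add_eq_zero
    ((isSymm_transpose_mul_self U).sub isSymm_one) (transpose_diagonal_lie lam (hS.sub hE)) hdecomp
  refine ⟨sub_eq_zero.1 horth, fun i j hij => ?_⟩
  have hentry : (lam i - lam j) * (S - E) i j = 0 := by
    rw [← diagonal_lie_apply, hlie, Matrix.zero_apply]
  exact sub_eq_zero.1 ((mul_eq_zero.1 hentry).resolve_left (sub_ne_zero.2 (hlam.ne hij)))

open scoped Matrix.Norms.Operator Topology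

theorem analyticAt_spectralMap (lam : V → ℝ) (U : Matrix V V ℝ) :
    AnalyticAt ℝ (spectralMap lam) U := by
  have htr : AnalyticAt ℝ (fun U : Matrix V V ℝ => Uᵀ) U :=
    (transposeLinearEquiv V V ℝ ℝ).toLinearMap.toContinuousLinearMap.analyticAt U
  have hconj : AnalyticAt ℝ (fun U : Matrix V V ℝ => U * diagonal lam * Uᵀ) U :=
    (analyticAt_id.mul analyticAt_const).mul htr
  exact (htr.mul analyticAt_id).add
    ((analyticAt_const.mul hconj).sub (hconj.mul analyticAt_const))

theorem fderiv_spectralMap_one_apply (lam : V → ℝ) (W : Matrix V V ℝ) :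
    fderiv ℝ (spectralMap lam) 1 W =
      (Wᵀ + W) + ⁅diagonal lam, W * diagonal lam + diagonal lam * Wᵀ⁆ := by
  have htr : HasFDerivAt (fun U : Matrix V V ℝ => Uᵀ)
      (transposeLinearEquiv V V ℝ ℝ).toLinearMap.toContinuousLinearMap 1 :=
    (transposeLinearEquiv V V ℝ ℝ).toLinearMap.toContinuousLinearMap.hasFDerivAt
  have hconj := ((hasFDerivAt_id (1 : Matrix V V ℝ)).mul_const' (diagonal lam)).mul' htr
  have hmap := (htr.mul' (hasFDerivAt_id 1)).add
    ((hconj.const_mul (diagonal lam)).sub (hconj.mul_const' (diagonal lam)))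
  have hfderiv : fderiv ℝ (spectralMap lam) 1 = _ := hmap.fderiv
  rw [hfderiv, Ring.lie_def]
  change 1ᵀ * W + Wᵀ * 1 +
    (diagonal lam * (1 * diagonal lam * Wᵀ + W * diagonal lam * 1ᵀ) -
      (1 * diagonal lam * Wᵀ + W * diagonal lam * 1ᵀ) * diagonal lam) = _
  rw [transpose_one, Matrix.one_mul, Matrix.mul_one, Matrix.one_mul, Matrix.mul_one, add_comm W,
    add_comm (W * diagonal lam)]

theorem fderiv_spectralMap_one_injective {lam : V → ℝ} (hlam : Function.Injective lam) :
    Function.Injective (fderiv ℝ (spectralMap lam) 1) := by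
  refine (injective_iff_map_eq_zero _).2 fun W hW => ?_
  rw [fderiv_spectralMap_one_apply] at hW
  have hsymm : (W * diagonal lam + diagonal lam * Wᵀ).IsSymm := by
    simp [IsSymm, add_comm]
  obtain ⟨hskew, hlie⟩ := symm_and_skew_eq_zero_of_add_eq_zero
    (isSymm_transpose_add_self W) (transpose_diagonal_lie lam hsymm) hW
  have hWT : ∀ i j, W j i = -W i j := fun i j =>
    eq_neg_of_add_eq_zero_left (congrFun (congrFun hskew i) j)
  ext i j
  rw [Matrix.zero_apply]
  obtain rfl | hij := eq_or_ne i j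
  · linarith [hWT i i]
  · have hentry : (lam i - lam j) ^ 2 * W i j = 0 := by
      have := congrFun (congrFun hlie i) j
      rw [diagonal_lie_apply, Matrix.add_apply, mul_diagonal, diagonal_mul, transpose_apply,
        hWT i j, Matrix.zero_apply] at this
      linear_combination -this
    exact (mul_eq_zero.1 hentry).resolve_left (pow_ne_zero 2 (sub_ne_zero.2 (hlam.ne hij)))

theorem exists_analyticAt_orthogonal_offDiag {lam : V → ℝ} (hlam : Function.Injective lam) :
    ∃ U : Matrix V V ℝ → Matrix V V ℝ, AnalyticAt ℝ U 0 ∧ U 0 = 1 ∧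
      ∀ᶠ E in 𝓝 0, E.IsSymm → (U E)ᵀ * U E = 1 ∧
        ∀ i j, i ≠ j → (U E * diagonal lam * (U E)ᵀ) i j = E i j := by
  obtain ⟨g, hg, hg1, hright⟩ := exists_analyticAt_rightInverse rfl
    (analyticAt_spectralMap lam 1) (fderiv_spectralMap_one_injective hlam)
  rw [spectralMap_one] at hg hg1 hright
  let τ : Matrix V V ℝ → Matrix V V ℝ := fun E => 1 + ⁅diagonal lam, E⁆
  have hτ : AnalyticAt ℝ τ 0 := analyticAt_const.add
    ((analyticAt_const.mul analyticAt_id).sub (analyticAt_id.mul analyticAt_const))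
  have hτ0 : τ 0 = 1 := by simp [τ, Ring.lie_def]
  refine ⟨g ∘ τ, (hτ0.symm ▸ hg).comp hτ, by simp [hτ0, hg1], ?_⟩
  filter_upwards [hτ.continuousAt.eventually (hτ0.symm ▸ hright)] with E hgE hE
  exact orthogonal_and_offDiag_of_spectralMap_eq hlam hE hgE

end Spectral

section OrthogonalDiagonalization

variable {V R : Type*} [Fintype V] [DecidableEq V] [CommRing R]

theorem charpoly_conj_diagonal {U : Matrix V V R} (hU : Uᵀ * U = 1) (lam : V → R) :
    (U * diagonal lam * Uᵀ).charpoly = ∏ i, (Polynomial.X - Polynomial.C (lam i)) := by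
  rw [charpoly_mul_comm, ← Matrix.mul_assoc, hU, Matrix.one_mul, charpoly_diagonal]

theorem conj_diagonal_mul {U : Matrix V V R} (hU : Uᵀ * U = 1) (lam : V → R) :
    U * diagonal lam * Uᵀ * U = U * diagonal lam := by
  rw [Matrix.mul_assoc, hU, Matrix.mul_one]

theorem conj_diagonal_mulVec_col {U : Matrix V V R} (hU : Uᵀ * U = 1) (lam : V → R) (j : V) :
    (U * diagonal lam * Uᵀ) *ᵥ U.col j = lam j • U.col j := by
  ext i
  change (U * diagonal lam * Uᵀ * U) i j = lam j * U i j
  rw [conj_diagonal_mul hU, mul_diagonal, mul_comm]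

theorem conj_diagonal_mul_apply_self (U : Matrix V V R) (z : V → R) (i : V) :
    (U * diagonal z * Uᵀ) i i = ((U ⊙ U) *ᵥ z) i := by
  rw [Matrix.mul_apply]
  exact Finset.sum_congr rfl fun j _ => by
    simp only [mul_diagonal, transpose_apply, hadamard_apply, mul_right_comm]

variable [IsDomain R]

theorem eq_diagonal_diag_of_commute_diagonal {lam : V → R} (hlam : Function.Injective lam)
    {Z : Matrix V V R} (hZ : Commute (diagonal lam) Z) : Z = diagonal Z.diag := by
  ext i j
  obtain rfl | hij := eq_or_ne i j
  · simp
  · have hentry : (lam i - lam j) * Z i j = 0 := by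
      rw [← diagonal_lie_apply, Ring.lie_def, hZ.eq, sub_self, Matrix.zero_apply]
    rw [diagonal_apply_ne _ hij]
    exact (mul_eq_zero.1 hentry).resolve_left (sub_ne_zero.2 (hlam.ne hij))

theorem roots_charpoly_conj_diagonal {U : Matrix V V R} (hU : Uᵀ * U = 1) (lam : V → R) :
    (U * diagonal lam * Uᵀ).charpoly.roots = Finset.univ.val.map lam := by
  rw [charpoly_conj_diagonal hU]
  rw [← Polynomial.roots_multiset_prod_X_sub_C (Finset.univ.val.map lam), Multiset.map_map]
  rfl

theorem eq_conj_diagonal_of_commute {lam : V → R} (hlam : Function.Injective lam)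
    {U X : Matrix V V R} (hU : Uᵀ * U = 1) (hX : Commute (U * diagonal lam * Uᵀ) X) :
    ∃ z, X = U * diagonal z * Uᵀ := by
  have hU' : U * Uᵀ = 1 := mul_eq_one_comm.1 hU
  have hcomm : Commute (diagonal lam) (Uᵀ * X * U) := by
    calc diagonal lam * (Uᵀ * X * U)
        = Uᵀ * (U * diagonal lam * Uᵀ * X) * U := by
          simp only [← Matrix.mul_assoc, hU, Matrix.one_mul]
      _ = Uᵀ * (X * (U * diagonal lam * Uᵀ)) * U := by rw [hX.eq]
      _ = Uᵀ * X * U * diagonal lam := by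
          simp only [Matrix.mul_assoc, hU, Matrix.mul_one]
  refine ⟨(Uᵀ * X * U).diag, ?_⟩
  rw [← eq_diagonal_diag_of_commute_diagonal hlam hcomm]
  simp only [← Matrix.mul_assoc, hU', Matrix.one_mul]
  rw [Matrix.mul_assoc, hU', Matrix.mul_one]

theorem conj_diagonal_apply_eq_zero_of_isolated {lam : V → R} (hlam : Function.Injective lam)
    {U : Matrix V V R} (hU : Uᵀ * U = 1) {k : V} (hk : U k k ≠ 0)
    (hiso : ∀ l, l ≠ k → (U * diagonal lam * Uᵀ) k l = 0) {l : V} (hl : l ≠ k) : U l k = 0 := by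
  set A := U * diagonal lam * Uᵀ with hA
  have heigen : ∀ m, A k k * U k m = U k m * lam m := fun m => by
    have hAU : (A * U) k m = U k m * lam m := by rw [hA, conj_diagonal_mul hU, mul_diagonal]
    rwa [Matrix.mul_apply, Fintype.sum_eq_single k fun b hb => by rw [hiso b hb, zero_mul]] at hAU
  have hAkk : A k k = lam k := mul_right_cancel₀ hk ((heigen k).trans (mul_comm _ _))
  have hrow : ∀ m, m ≠ k → U k m = 0 := fun m hm => by
    have hmul : (lam k - lam m) * U k m = 0 := by
      linear_combination heigen m - U k m * hAkk
    exact (mul_eq_zero.1 hmul).resolve_left (sub_ne_zero.2 (hlam.ne hm.symm))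
  have hcol : U l k * U k k = 0 := by
    have hUUT : (U * Uᵀ) l k = 0 := by rw [mul_eq_one_comm.1 hU, one_apply_ne hl]
    rwa [Matrix.mul_apply, Fintype.sum_eq_single k
      fun b hb => by rw [transpose_apply, hrow b hb, mul_zero]] at hUUT
  exact (mul_eq_zero.1 hcol).resolve_right hk

end OrthogonalDiagonalization

section SSP

variable {V : Type*} [Fintype V] [DecidableEq V]

theorem hasSSP_conj_diagonal {lam : V → ℝ} (hlam : Function.Injective lam) {U : Matrix V V ℝ}
    (hU : Uᵀ * U = 1) (hdet : (U ⊙ U).det ≠ 0) : HasSSP (U * diagonal lam * Uᵀ) := by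
  intro X _ hcomm _ hdiag
  obtain ⟨z, rfl⟩ := eq_conj_diagonal_of_commute hlam hU hcomm
  have hker : (U ⊙ U) *ᵥ z = 0 := by
    ext i
    rw [← conj_diagonal_mul_apply_self]
    exact congrFun (one_hadamard_eq_zero_iff.1 hdiag) i
  rw [eq_zero_of_mulVec_eq_zero hdet hker]
  simp

end SSP

section Paths

variable {V : Type*} {G : SimpleGraph V}

theorem exists_isPath_forall_mem_support_eq {P : V → Prop} {i j : V} (p : G.Walk i j) (hj : P j) :
    ∃ k, ∃ q : G.Walk i k, q.IsPath ∧ P k ∧ ∀ l ∈ q.support, P l → l = k := by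
  classical
  induction p with
  | nil => exact ⟨_, .nil, .nil, hj, by simp⟩
  | @cons i _ _ h _ ih =>
    by_cases hi : P i
    · exact ⟨i, .nil, .nil, hi, by simp⟩
    obtain ⟨k, q, -, hk, hq⟩ := ih hj
    refine ⟨k, (q.cons h).bypass, SimpleGraph.Walk.bypass_isPath _, hk, fun l hl hPl => ?_⟩
    obtain rfl | hlq := List.mem_cons.1 ((q.cons h).support_bypass_subset_support hl)
    · exact absurd hPl hi
    · exact hq l hlq hPl

variable {R : Type*} [CommRing R] [IsDomain R] [Fintype V]

theorem eigenvector_apply_eq_zero_of_isPath {A : Matrix V V R} {w : V → R} {μ : R}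
    (hAw : A *ᵥ w = μ • w) {i j : V} {p : G.Walk i j} (hp : p.IsPath) (hwi : w i = 0)
    (hedge : ∀ k l, s(k, l) ∈ p.edges → A k l ≠ 0)
    (hsupp : ∀ k ∈ p.support, ∀ l, A k l ≠ 0 → k = l ∨ s(k, l) ∈ p.edges ∨ w l = 0) :
    w j = 0 := by
  induction p with
  | nil => exact hwi
  | @cons i b j h q ih =>
    obtain ⟨hq, hiq⟩ := (SimpleGraph.Walk.cons_isPath_iff h q).1 hp
    simp only [SimpleGraph.Walk.edges_cons, List.mem_cons, SimpleGraph.Walk.support_cons]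
      at hedge hsupp
    have hrow : ∀ l, l ≠ b → A i l * w l = 0 := fun l hlb => by
      by_contra hne
      obtain ⟨hAl, hwl⟩ := mul_ne_zero_iff.1 hne
      obtain rfl | (hl | hl) | hl := hsupp i (.inl rfl) l hAl
      · exact hwl hwi
      · exact hlb (Sym2.congr_right.1 hl)
      · exact hiq (q.fst_mem_support_of_mem_edges hl)
      · exact hwl hl
    have hsum : A i b * w b = 0 := by
      have := congrFun hAw i
      rwa [mulVec, dotProduct, Pi.smul_apply, hwi, smul_zero,
        Fintype.sum_eq_single b hrow] at this
    have hwb : w b = 0 := (mul_eq_zero.1 hsum).resolve_left (hedge i b (.inl rfl))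
    refine ih hq hwb (fun k l hkl => hedge k l (.inr hkl)) fun k hk l hAkl => ?_
    obtain hkl | (hkl | hkl) | hwl := hsupp k (.inr hk) l hAkl
    · exact .inl hkl
    · obtain ⟨rfl, rfl⟩ | ⟨rfl, rfl⟩ := Sym2.eq_iff.1 hkl
      · exact absurd hk hiq
      · exact .inr (.inr hwi)
    · exact .inr (.inl hkl)
    · exact .inr (.inr hwl)

theorem mulVec_apply_ne_zero_of_isPath [DecidableEq V] {lam : V → R}
    (hlam : Function.Injective lam) {U : Matrix V V R} (hU : Uᵀ * U = 1) (hdiag : ∀ k, U k k ≠ 0)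
    {i j : V} {p : G.Walk i j} (hp : p.IsPath)
    (hA : ∀ k l, k ≠ l → ((U * diagonal lam * Uᵀ) k l ≠ 0 ↔ s(k, l) ∈ p.edges))
    {v : V → R} (hvj : v j ≠ 0) (hv : ∀ l ∈ p.support, v l ≠ 0 → l = j) :
    (U *ᵥ v) i ≠ 0 := by
  have hUij : U i j ≠ 0 := fun hij => hdiag j <|
    eigenvector_apply_eq_zero_of_isPath (conj_diagonal_mulVec_col hU lam j) hp hij
      (fun k l hkl => (hA k l (p.adj_of_mem_edges hkl).ne).2 hkl)
      (fun k _ l hAkl => or_iff_not_imp_left.2 fun hkl => .inl ((hA k l hkl).1 hAkl))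
  have hrow : ∀ l, l ≠ j → U i l * v l = 0 := fun l hlj => by
    by_cases hl : l ∈ p.support
    · rw [not_imp_comm.1 (hv l hl) hlj, mul_zero]
    · have hiso : ∀ k, k ≠ l → (U * diagonal lam * Uᵀ) l k = 0 := fun k hk =>
        not_imp_comm.1 (hA l k hk.symm).1 fun hlk => hl (p.fst_mem_support_of_mem_edges hlk)
      have hil : i ≠ l := fun h => hl (h ▸ p.start_mem_support)
      rw [conj_diagonal_apply_eq_zero_of_isolated hlam hU (hdiag l) hiso hil, zero_mul]
  rw [mulVec, dotProduct, Fintype.sum_eq_single j hrow]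
  exact mul_ne_zero hUij hvj

end Paths

section WeightedAdjacency

variable {V : Type*}

/-- The adjacency matrix of `G` in which the edge `e` carries the weight `w e`. The weights of the
other elements of `Sym2 V` are ignored, so that weights range over a fixed vector space. -/
noncomputable def weightedAdj (G : SimpleGraph V) : (Sym2 V → ℝ) →ₗ[ℝ] Matrix V V ℝ where
  toFun w := of fun i j => G.edgeSet.indicator w s(i, j)
  map_add' w w' := by ext; simp [Set.indicator_add']
  map_smul' t w := by ext i j; exact Set.indicator_const_smul_apply _ t w _

theorem weightedAdj_apply (G : SimpleGraph V) (w : Sym2 V → ℝ) (i j : V) :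
    weightedAdj G w i j = G.edgeSet.indicator w s(i, j) :=
  rfl

theorem isSymm_weightedAdj (G : SimpleGraph V) (w : Sym2 V → ℝ) : (weightedAdj G w).IsSymm := by
  ext i j
  rw [transpose_apply, weightedAdj_apply, weightedAdj_apply, Sym2.eq_swap]

theorem weightedAdj_apply_ne_zero_iff (G : SimpleGraph V) (w : Sym2 V → ℝ) (i j : V) :
    weightedAdj G w i j ≠ 0 ↔ G.Adj i j ∧ w s(i, j) ≠ 0 := by
  rw [weightedAdj_apply, Set.indicator_apply_ne_zero]
  rfl

variable [Fintype V] [DecidableEq V]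

/-- `U` is orthogonal and the off-diagonal part of `U * diagonal lam * Uᵀ` is the weighted adjacency
matrix of `G` with edge weights `w`. The fields `diag_ne_zero` and `det_hadamard_ne_zero` are the
open conditions, valid near `U = 1`, that the nonvanishing argument and the SSP rest on. -/
structure IsRealisation (G : SimpleGraph V) (lam : V → ℝ) (w : Sym2 V → ℝ)
    (U : Matrix V V ℝ) : Prop where
  orthogonal : Uᵀ * U = 1
  offDiag : ∀ i j, i ≠ j → (U * diagonal lam * Uᵀ) i j = weightedAdj G w i j
  diag_ne_zero : ∀ k, U k k ≠ 0
  det_hadamard_ne_zero : (U ⊙ U).det ≠ 0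

variable {G : SimpleGraph V} {lam : V → ℝ}

theorem IsRealisation.offDiag_ne_zero_iff {w : Sym2 V → ℝ} {U : Matrix V V ℝ}
    (h : IsRealisation G lam w U) {i j : V} (hij : i ≠ j) :
    (U * diagonal lam * Uᵀ) i j ≠ 0 ↔ G.Adj i j ∧ w s(i, j) ≠ 0 := by
  rw [h.offDiag i j hij, weightedAdj_apply_ne_zero_iff]

theorem IsRealisation.inS {w : Sym2 V → ℝ} {U : Matrix V V ℝ} (h : IsRealisation G lam w U)
    (hw : ∀ e, w e ≠ 0) : inS G (U * diagonal lam * Uᵀ) :=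
  ⟨isSymm_conj_diagonal lam U, fun i j hij => by
    simp only [h.offDiag_ne_zero_iff hij, hw, ne_eq, not_false_iff, and_true]⟩

open scoped Topology

open scoped Matrix.Norms.Operator in
theorem exists_analyticAt_isRealisation (G : SimpleGraph V) (hlam : Function.Injective lam) :
    ∃ U : (Sym2 V → ℝ) → Matrix V V ℝ, AnalyticAt ℝ U 0 ∧
      ∀ᶠ w in 𝓝 0, IsRealisation G lam w (U w) := by
  obtain ⟨U, hU, hU0, hUE⟩ := exists_analyticAt_orthogonal_offDiag hlam
  have hadj : AnalyticAt ℝ (weightedAdj G) 0 :=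
    (weightedAdj G).toContinuousLinearMap.analyticAt 0
  have hadj0 : weightedAdj G 0 = 0 := map_zero _
  have hUadj : AnalyticAt ℝ (fun w => U (weightedAdj G w)) 0 := (hadj0.symm ▸ hU).comp hadj
  have hlim : Tendsto (fun w => U (weightedAdj G w)) (𝓝 0) (𝓝 1) :=
    hU0 ▸ hadj0 ▸ hUadj.continuousAt
  refine ⟨_, hUadj, ?_⟩
  filter_upwards [hadj.continuousAt.eventually (hadj0.symm ▸ hUE),
    hlim.eventually eventually_nhds_one_diag_ne_zero,
    hlim.eventually eventually_nhds_one_det_hadamard_ne_zero] with w hw hdiag hdet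
  obtain ⟨horth, hoff⟩ := hw (isSymm_weightedAdj G w)
  exact ⟨horth, hoff, hdiag, hdet⟩

theorem frequently_mulVec_apply_ne_zero (hG : G.Preconnected) (hlam : Function.Injective lam)
    {U : (Sym2 V → ℝ) → Matrix V V ℝ} (hU : ∀ᶠ w in 𝓝 0, IsRealisation G lam w (U w))
    {y : V → ℝ} (hy : y ≠ 0) (i : V) : ∃ᶠ w in 𝓝 0, (U w *ᵥ y) i ≠ 0 := by
  obtain ⟨j, hj⟩ := Function.ne_iff.1 hy
  obtain ⟨k, p, hp, hk, hpk⟩ :=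
    exists_isPath_forall_mem_support_eq (P := fun l => y l ≠ 0) (hG i j).some hj
  refine frequently_nhds_zero_of_forall_smul ({e | e ∈ p.edges}.indicator 1) hU
    fun t ht hUt => mulVec_apply_ne_zero_of_isPath hlam hUt.orthogonal hUt.diag_ne_zero hp
      (fun l m hlm => ?_) hk hpk
  rw [hUt.offDiag_ne_zero_iff hlm]
  have hweight : (t • {e | e ∈ p.edges}.indicator (1 : Sym2 V → ℝ)) s(l, m) ≠ 0 ↔
      s(l, m) ∈ p.edges := by
    simp [ht]
  rw [hweight, and_iff_right_of_imp p.adj_of_mem_edges]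

open scoped Matrix.Norms.Operator in
theorem exists_isRealisation_forall_ne_zero (hG : G.Preconnected) (hlam : Function.Injective lam)
    {Y : Finset (V → ℝ)} (hY : ∀ y ∈ Y, y ≠ 0) :
    ∃ w U, IsRealisation G lam w U ∧ (∀ e, w e ≠ 0) ∧ ∀ y ∈ Y, ∀ i, (U *ᵥ y) i ≠ 0 := by
  obtain ⟨U, hU, hreal⟩ := exists_analyticAt_isRealisation G hlam
  let f : Sym2 V ⊕ Y × V → (Sym2 V → ℝ) → ℝ :=
    Sum.elim (fun e w => w e) fun yi w => (U w *ᵥ yi.1) yi.2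
  have hf : ∀ a, AnalyticAt ℝ (f a) 0 := by
    rintro (e | ⟨y, i⟩)
    · exact (ContinuousLinearMap.proj (R := ℝ) (φ := fun _ : Sym2 V => ℝ) e).analyticAt 0
    · exact analyticAt_mulVec_apply hU _ _
  have hf0 : ∀ a, ∃ᶠ w in 𝓝 0, f a w ≠ 0 := by
    rintro (e | ⟨y, i⟩)
    · exact frequently_apply_ne_zero e
    · exact frequently_mulVec_apply_ne_zero hG hlam hreal (hY y y.2) i
  obtain ⟨w, hw, hUw⟩ :=
    ((frequently_forall_ne_zero_of_analyticAt hf hf0).and_eventually hreal).exists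
  exact ⟨w, U w, hUw, fun e => hw (.inl e), fun y hy i => hw (.inr (⟨y, hy⟩, i))⟩

end WeightedAdjacency

theorem statement3_general {V : Type*} [Fintype V] [DecidableEq V] {G : SimpleGraph V}
    (hG : G.Preconnected) {lam : V → ℝ} (hlam : Function.Injective lam)
    {Y : Finset (V → ℝ)} (hY : ∀ y ∈ Y, y ≠ 0) :
    ∃ A U : Matrix V V ℝ,
      inS G A ∧ specMultiset A = Finset.univ.val.map lam ∧ HasSSP A ∧
      Uᵀ * U = 1 ∧ Uᵀ * A * U = diagonal lam ∧
      ∀ y ∈ Y, ∀ i, U.mulVec y i ≠ 0 := by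
  obtain ⟨w, U, hU, hw, hUY⟩ := exists_isRealisation_forall_ne_zero hG hlam hY
  refine ⟨U * diagonal lam * Uᵀ, U, hU.inS hw, roots_charpoly_conj_diagonal hU.orthogonal lam,
    hasSSP_conj_diagonal hlam hU.orthogonal hU.det_hadamard_ne_zero, hU.orthogonal, ?_, hUY⟩
  rw [Matrix.mul_assoc, conj_diagonal_mul hU.orthogonal, ← Matrix.mul_assoc, hU.orthogonal,
    Matrix.one_mul]

/-- Theorem 2.4: for a connected graph `G`, distinct eigenvalues and a finite
set `Y` of nonzero vectors, there are `A ∈ S(G) ∩ 𝓔_Λ` with the SSP and orthogonal `U`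
diagonalising `A` such that `U v` is nowhere-zero for all `v ∈ Y`. -/
theorem statement3 (m : ℕ) (G : SimpleGraph (Fin m)) (hG : G.Connected)
    (lam : Fin m → ℝ) (hlam : StrictMono lam)
    (Y : Finset (Fin m → ℝ)) (hY : ∀ y ∈ Y, y ≠ 0) :
    ∃ A U : Matrix (Fin m) (Fin m) ℝ,
      inS G A ∧ specMultiset A = Finset.univ.val.map lam ∧ HasSSP A ∧
      Uᵀ * U = 1 ∧ Uᵀ * A * U = Matrix.diagonal lam ∧
      ∀ y ∈ Y, ∀ i, U.mulVec y i ≠ 0 :=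
  statement3_general hG.preconnected hlam.injective hY
end

section
/- For every n ≥ 1, the path P_n is generically realisable. Concretely: the maximum eigenvalue multiplicity of any matrix in S(P_n) is 1, and for all real numbers λ₁ < λ₂ < … < λ_n and every finite set Y ⊆ ℝⁿ ∖ {0}, there exist a matrix A ∈ S(P_n) with spectrum {λ₁,…,λ_n} and an orthogonal matrix U with Uᵀ A U = diag(λ₁,…,λ_n) such that U y is nowhere-zero for every y ∈ Y. -/
open Matrix Filter

/-! Orthonormalising the Krylov sequence `w, Λw, Λ²w, …` of `Λ = diag(λ₁, …, λₙ)` gives the rows of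
an orthogonal matrix `U` for which `U Λ Uᵀ` is tridiagonal with nonzero off-diagonal entries,
because `Λ` maps the span of the first `i` Krylov vectors into that of the first `i + 1`. The
pairing of `y` with row `i` (counted from `0`) vanishes only if a certain determinant,
polynomial in `w`, does. For `y ≠ 0` this polynomial is not zero: restrict `w` to `i + 1` nodes,
the last of them in the support of `y`. The determinant becomes the product of a nonzero
weighted Vandermonde determinant and a second one, whose values at the weights `1` and `-1` of
the last node (the other weights being `1`) cannot both vanish: their sum is a Vandermonde minor
times twice that entry of `y`. Hence some `w` avoids the zeros of these finitely many
polynomials. Eigenvalues are simple because the three-term recurrence determines an eigenvector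
by its first entry.
-/

section GramSchmidt

open InnerProductSpace

variable {𝕜 E : Type*} [RCLike 𝕜] [NormedAddCommGroup E] [InnerProductSpace 𝕜 E]

section LinearOrder

variable {ι : Type*} [LinearOrder ι] [LocallyFiniteOrderBot ι] [WellFoundedLT ι]

lemma inner_gramSchmidt_eq_zero_of_mem_span {f : ι → E} {j : ι} {v : E}
    (hv : v ∈ Submodule.span 𝕜 (f '' Set.Iio j)) : inner 𝕜 v (gramSchmidt 𝕜 f j) = 0 := by
  rw [← span_gramSchmidt_Iio] at hv
  induction hv using Submodule.span_induction with
  | mem _ h =>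
    obtain ⟨a, ha, rfl⟩ := h
    exact gramSchmidt_orthogonal 𝕜 f (Set.mem_Iio.1 ha).ne
  | zero => exact inner_zero_left _
  | add _ _ _ _ hu hv => rw [inner_add_left, hu, hv, add_zero]
  | smul c _ _ hu => rw [inner_smul_left, hu, mul_zero]

lemma sub_gramSchmidt_mem_span (f : ι → E) (j : ι) :
    f j - gramSchmidt 𝕜 f j ∈ Submodule.span 𝕜 (f '' Set.Iio j) := by
  rw [gramSchmidt_def, sub_sub_cancel, ← span_gramSchmidt_Iio]
  refine Submodule.sum_mem _ fun a ha => ?_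
  refine Submodule.span_mono ?_ (Submodule.starProjection_apply_mem _ (f j))
  exact Set.singleton_subset_iff.2 (Set.mem_image_of_mem _ (Finset.mem_Iio.1 ha))

end LinearOrder

lemma inner_gramSchmidt_ne_zero_of_det_ne_zero {f : ℕ → E} {i : ℕ} {y : E}
    (h : (of fun a b : Fin (i + 1) => inner 𝕜 (Function.update f i y a) (f b)).det ≠ 0) :
    inner 𝕜 y (gramSchmidt 𝕜 f i) ≠ 0 := by
  intro hy
  obtain ⟨c, hc⟩ : ∃ c : Fin (i + 1) → 𝕜,
      c (Fin.last i) = 1 ∧ ∑ b, c b • f b = gramSchmidt 𝕜 f i := by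
    have hmem := sub_gramSchmidt_mem_span (𝕜 := 𝕜) f i
    have himage : f '' Set.Iio i = Set.range fun b : Fin i => f b := by
      rw [← Fin.range_val, ← Set.range_comp, Function.comp_def]
    rw [himage, Submodule.mem_span_range_iff_exists_fun] at hmem
    obtain ⟨d, hd⟩ := hmem
    refine ⟨Fin.snoc (α := fun _ => 𝕜) (-d) 1, Fin.snoc_last _ _, ?_⟩
    simp [Fin.sum_univ_castSucc, hd]
  have hker : (of fun a b : Fin (i + 1) => inner 𝕜 (Function.update f i y a) (f b)) *ᵥ c = 0 := by
    funext a
    calc ∑ b : Fin (i + 1), inner 𝕜 (Function.update f i y a) (f b) * c b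
        = inner 𝕜 (Function.update f i y a) (gramSchmidt 𝕜 f i) := by
          simp only [← hc.2, inner_sum, inner_smul_right, mul_comm]
      _ = 0 := by
          rcases (Nat.lt_succ_iff.1 a.2).eq_or_lt with ha | ha
          · rwa [ha, Function.update_self]
          · rw [Function.update_of_ne ha.ne]
            exact inner_gramSchmidt_eq_zero_of_mem_span
              (Submodule.subset_span (Set.mem_image_of_mem f ha))
  exact one_ne_zero (hc.1.symm.trans (congrFun (eq_zero_of_mulVec_eq_zero h hker) (Fin.last i)))

/-- The Krylov sequence `x, T x, T² x, …` generated by the vector `x` under the operator `T`. -/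
def krylov (T : Module.End 𝕜 E) (x : E) (a : ℕ) : E := (T ^ a) x

lemma map_krylov (T : Module.End 𝕜 E) (x : E) (a : ℕ) :
    T (krylov T x a) = krylov T x (a + 1) := by
  rw [krylov, krylov, pow_succ', Module.End.mul_apply]

/-- The `i`-th vector of the Lanczos method: the unnormalised Gram–Schmidt orthogonalisation of the
Krylov sequence. For a symmetric `T` these vectors make `T` tridiagonal. -/
noncomputable def lanczosVector (T : Module.End 𝕜 E) (x : E) (i : ℕ) : E :=
  gramSchmidt 𝕜 (krylov T x) i

lemma map_lanczosVector_sub_mem_span (T : Module.End 𝕜 E) (x : E) (i : ℕ) :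
    T (lanczosVector T x i) - lanczosVector T x (i + 1) ∈
      Submodule.span 𝕜 (krylov T x '' Set.Iio (i + 1)) := by
  have hmap : (Submodule.span 𝕜 (krylov T x '' Set.Iio i)).map T ≤
      Submodule.span 𝕜 (krylov T x '' Set.Iio (i + 1)) := by
    rw [Submodule.map_span_le]
    rintro _ ⟨a, ha, rfl⟩
    rw [map_krylov]
    exact Submodule.subset_span (Set.mem_image_of_mem _ (Nat.succ_lt_succ ha))
  have hT := hmap (Submodule.mem_map_of_mem (sub_gramSchmidt_mem_span (krylov T x) i))
  rw [map_sub, map_krylov] at hT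
  have hsub := sub_mem (sub_gramSchmidt_mem_span (𝕜 := 𝕜) (krylov T x) (i + 1)) hT
  rwa [sub_sub_sub_cancel_left] at hsub

lemma inner_map_lanczosVector_of_lt (T : Module.End 𝕜 E) (x : E) {i j : ℕ} (hij : i + 1 < j) :
    inner 𝕜 (T (lanczosVector T x i)) (lanczosVector T x j) = 0 := by
  rw [← sub_add_cancel (T (lanczosVector T x i)) (lanczosVector T x (i + 1)), inner_add_left,
    lanczosVector, lanczosVector, lanczosVector, gramSchmidt_orthogonal 𝕜 _ hij.ne, add_zero]
  refine inner_gramSchmidt_eq_zero_of_mem_span ?_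
  exact Submodule.span_mono (Set.image_mono (Set.Iio_subset_Iio hij.le))
    (map_lanczosVector_sub_mem_span T x i)

lemma inner_map_lanczosVector_succ (T : Module.End 𝕜 E) (x : E) (i : ℕ) :
    inner 𝕜 (T (lanczosVector T x i)) (lanczosVector T x (i + 1)) =
      inner 𝕜 (lanczosVector T x (i + 1)) (lanczosVector T x (i + 1)) := by
  rw [← sub_eq_zero, ← inner_sub_left]
  exact inner_gramSchmidt_eq_zero_of_mem_span (map_lanczosVector_sub_mem_span T x i)

end GramSchmidt

section PathMatrices

lemma inS_pathGraph_iff {n : ℕ} {A : Matrix (Fin n) (Fin n) ℝ} :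
    inS (SimpleGraph.pathGraph n) A ↔
      A.IsSymm ∧ (∀ i j : Fin n, i.val + 1 < j → A i j = 0) ∧
        ∀ i j : Fin n, i.val + 1 = j → A i j ≠ 0 := by
  refine and_congr_right fun hA => ⟨fun h => ⟨fun i j hij => ?_, fun i j hij => ?_⟩, ?_⟩
  · refine not_not.1 ((h i j (Fin.ne_of_val_ne (by omega))).not.2 ?_)
    rw [SimpleGraph.pathGraph_adj]
    omega
  · exact (h i j (Fin.ne_of_val_ne (by omega))).2 (SimpleGraph.pathGraph_adj.2 (Or.inl hij))
  · rintro ⟨hfar, hnear⟩ i j hij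
    wlog hlt : i < j generalizing i j
    · rw [← hA.apply i j, SimpleGraph.adj_comm]
      exact this j i hij.symm (lt_of_le_of_ne (not_lt.1 hlt) hij.symm)
    rw [SimpleGraph.pathGraph_adj]
    have := hfar i j
    have := hnear i j
    grind

lemma eq_zero_of_mulVec_eq_smul_of_apply_zero {n : ℕ} {A : Matrix (Fin (n + 1)) (Fin (n + 1)) ℝ}
    (hA : inS (SimpleGraph.pathGraph (n + 1)) A) {μ : ℝ} {x : Fin (n + 1) → ℝ}
    (hx : A *ᵥ x = μ • x) (h0 : x 0 = 0) : x = 0 := by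
  obtain ⟨-, hfar, hnear⟩ := inS_pathGraph_iff.1 hA
  funext k
  induction k using WellFoundedLT.induction with
  | _ k ih =>
    cases k using Fin.cases with
    | zero => exact h0
    | succ m =>
      have hrow : A m.castSucc m.succ * x m.succ = 0 := by
        rw [← Fintype.sum_eq_single (f := fun b => A m.castSucc b * x b) m.succ]
        · exact (congrFun hx m.castSucc).trans
            (by rw [Pi.smul_apply, ih _ m.castSucc_lt_succ, Pi.zero_apply, smul_zero])
        · intro b hb
          rcases hb.lt_or_gt with hlt | hgt
          · rw [ih b hlt, Pi.zero_apply, mul_zero]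
          · rw [hfar m.castSucc b hgt, zero_mul]
      exact (mul_eq_zero.1 hrow).resolve_left (hnear _ _ rfl)

lemma eigenvalues_injective_of_inS_pathGraph {n : ℕ} {A : Matrix (Fin (n + 1)) (Fin (n + 1)) ℝ}
    (hA : inS (SimpleGraph.pathGraph (n + 1)) A) (hH : A.IsHermitian) :
    Function.Injective hH.eigenvalues := by
  intro i j hij
  by_contra hne
  set u := hH.eigenvectorBasis i
  set v := hH.eigenvectorBasis j
  have hu : A *ᵥ u = hH.eigenvalues i • ⇑u := hH.mulVec_eigenvectorBasis i
  have hv : A *ᵥ v = hH.eigenvalues i • ⇑v := hij ▸ hH.mulVec_eigenvectorBasis j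
  have hdep : v 0 • u + (-u 0) • v = 0 := by
    refine WithLp.ofLp_injective 2 (eq_zero_of_mulVec_eq_smul_of_apply_zero hA
      (μ := hH.eigenvalues i) ?_ ?_)
    · simp only [WithLp.ofLp_add, WithLp.ofLp_smul, mulVec_add, mulVec_smul, hu, hv, smul_add,
        smul_comm (hH.eigenvalues i)]
    · simp [mul_comm]
  have hindep := (LinearIndepOn.pair_iff _ hne).1
    (hH.eigenvectorBasis.orthonormal.linearIndependent.linearIndepOn {i, j})
  have hu0 : u 0 = 0 := neg_eq_zero.1 (hindep _ _ hdep).2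
  exact hH.eigenvectorBasis.orthonormal.ne_zero i (WithLp.ofLp_injective 2
    (eq_zero_of_mulVec_eq_smul_of_apply_zero hA hu hu0))

lemma nodup_specMultiset_of_inS_pathGraph {n : ℕ} {A : Matrix (Fin n) (Fin n) ℝ}
    (hA : inS (SimpleGraph.pathGraph n) A) : (specMultiset A).Nodup := by
  have hH : A.IsHermitian := (conjTranspose_eq_transpose_of_trivial A).trans hA.1
  rw [specMultiset, hH.roots_charpoly_eq_eigenvalues]
  cases n with
  | zero => exact Finset.univ.nodup.map (Function.injective_of_subsingleton _)
  | succ n =>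
    exact Finset.univ.nodup.map
      (RCLike.ofReal_injective.comp (eigenvalues_injective_of_inS_pathGraph hA hH))

lemma specMultiset_mul_diagonal_mul_transpose {V : Type*} [Fintype V] [DecidableEq V]
    {U : Matrix V V ℝ} (hU : Uᵀ * U = 1) (d : V → ℝ) :
    specMultiset (U * diagonal d * Uᵀ) = Finset.univ.val.map d := by
  have hroots := Polynomial.roots_multiset_prod_X_sub_C (Finset.univ.val.map d)
  rw [Multiset.map_map] at hroots
  rw [specMultiset, charpoly_mul_comm, ← Matrix.mul_assoc, hU, Matrix.one_mul, charpoly_diagonal]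
  exact hroots

end PathMatrices

section Lanczos

variable {ι : Type*} [Fintype ι] [DecidableEq ι] {n : ℕ}

/-- The matrix whose rows are the first `n` normalised Lanczos vectors of `M` started at `x`. A row
vanishes where the Krylov sequence becomes linearly dependent. -/
noncomputable def lanczosMatrix (n : ℕ) (M : Matrix ι ι ℝ) (x : EuclideanSpace ℝ ι) :
    Matrix (Fin n) ι ℝ :=
  of fun i => WithLp.ofLp
    (‖lanczosVector (toEuclideanLin M) x i‖⁻¹ • lanczosVector (toEuclideanLin M) x i)

lemma lanczosMatrix_mulVec_apply (M : Matrix ι ι ℝ) (x : EuclideanSpace ℝ ι) (y : ι → ℝ)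
    (i : Fin n) :
    (lanczosMatrix n M x *ᵥ y) i =
      ‖lanczosVector (toEuclideanLin M) x i‖⁻¹ *
        inner ℝ (WithLp.toLp 2 y) (lanczosVector (toEuclideanLin M) x i) := by
  rw [← real_inner_smul_right, EuclideanSpace.inner_eq_star_dotProduct, star_trivial]
  rfl

lemma lanczosMatrix_mul_mul_transpose_apply (M N : Matrix ι ι ℝ) (x : EuclideanSpace ℝ ι)
    (i j : Fin n) :
    (lanczosMatrix n M x * N * (lanczosMatrix n M x)ᵀ) i j =
      ‖lanczosVector (toEuclideanLin M) x i‖⁻¹ * (‖lanczosVector (toEuclideanLin M) x j‖⁻¹ *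
        inner ℝ (toEuclideanLin N (lanczosVector (toEuclideanLin M) x j))
          (lanczosVector (toEuclideanLin M) x i)) := by
  rw [← real_inner_smul_left, ← map_smul, ← real_inner_smul_right,
    EuclideanSpace.inner_eq_star_dotProduct, star_trivial, Matrix.mul_assoc]
  rfl

lemma lanczosMatrix_mul_transpose_self {M : Matrix ι ι ℝ} {x : EuclideanSpace ℝ ι}
    (hne : ∀ i < n, lanczosVector (toEuclideanLin M) x i ≠ 0) :
    lanczosMatrix n M x * (lanczosMatrix n M x)ᵀ = 1 := by
  ext i j
  have hentry := lanczosMatrix_mul_mul_transpose_apply M 1 x i j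
  rw [Matrix.mul_one, toLpLin_one, LinearMap.id_apply] at hentry
  rw [hentry]
  rcases eq_or_ne i j with rfl | hij
  · have hnorm : ‖lanczosVector (toEuclideanLin M) x i‖ ≠ 0 := norm_ne_zero_iff.2 (hne i i.2)
    rw [real_inner_self_eq_norm_sq, one_apply_eq]
    field_simp
  · rw [one_apply_ne hij, lanczosVector, lanczosVector,
      InnerProductSpace.gramSchmidt_orthogonal ℝ _ (Fin.val_ne_of_ne hij.symm), mul_zero, mul_zero]

lemma inS_pathGraph_lanczosMatrix {M : Matrix ι ι ℝ} (hM : M.IsSymm) {x : EuclideanSpace ℝ ι}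
    (hne : ∀ i < n, lanczosVector (toEuclideanLin M) x i ≠ 0) :
    inS (SimpleGraph.pathGraph n) (lanczosMatrix n M x * M * (lanczosMatrix n M x)ᵀ) := by
  have hsymm : (lanczosMatrix n M x * M * (lanczosMatrix n M x)ᵀ).IsSymm := by
    rw [IsSymm, transpose_mul, transpose_mul, transpose_transpose, hM.eq, Matrix.mul_assoc]
  refine inS_pathGraph_iff.2 ⟨hsymm, fun i j hij => ?_, fun i j hij => ?_⟩
  · rw [← hsymm.apply, lanczosMatrix_mul_mul_transpose_apply, inner_map_lanczosVector_of_lt _ _ hij,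
      mul_zero, mul_zero]
  · have hi := hne i i.2
    have hj := hne j j.2
    rw [← hsymm.apply, lanczosMatrix_mul_mul_transpose_apply, ← hij,
      inner_map_lanczosVector_succ, hij]
    exact mul_ne_zero (inv_ne_zero (norm_ne_zero_iff.2 hj))
      (mul_ne_zero (inv_ne_zero (norm_ne_zero_iff.2 hi)) (inner_self_ne_zero.2 hj))

end Lanczos

section Genericity

variable {ι R : Type*} [CommRing R]

/-- The `m × ι` matrix `(lam k ^ a * w k)`, whose rows are the first `m` vectors of the Krylov
sequence of `w` under `diagonal lam`. -/
def weightedVandermonde (m : ℕ) (lam w : ι → R) : Matrix (Fin m) ι R :=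
  of fun a k => lam k ^ a.val * w k

lemma det_weightedVandermonde {m : ℕ} (lam w : Fin m → R) :
    (weightedVandermonde m lam w).det = (vandermonde lam).det * ∏ k, w k := by
  have hfactor : weightedVandermonde m lam w = (vandermonde lam)ᵀ * diagonal w := by
    ext a k
    simp [weightedVandermonde, mul_diagonal, vandermonde_apply]
  rw [hfactor, det_mul, det_transpose, det_diagonal]

lemma det_weightedVandermonde_updateRow_add {i : ℕ} (lam y : Fin (i + 1) → R) :
    ((weightedVandermonde (i + 1) lam 1).updateRow (Fin.last i) y).det +
      ((weightedVandermonde (i + 1) lam (Function.update 1 (Fin.last i) (-1))).updateRow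
        (Fin.last i) y).det =
      2 * y (Fin.last i) * (vandermonde fun s : Fin i => lam s.castSucc).det := by
  set B := (weightedVandermonde (i + 1) lam 1).updateRow (Fin.last i) y
  set B' := (weightedVandermonde (i + 1) lam (Function.update 1 (Fin.last i) (-1))).updateRow
    (Fin.last i) y
  have hself : B.updateCol (Fin.last i) (B.col (Fin.last i)) = B := updateCol_eq_self B _
  have hB' : B' = B.updateCol (Fin.last i) (B'.col (Fin.last i)) := by
    ext a s
    refine Fin.lastCases ?_ (fun s => ?_) s
    · simp
    · simp [B, B', weightedVandermonde, updateRow_apply, Fin.castSucc_ne_last]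
  have hcol : B.col (Fin.last i) + B'.col (Fin.last i) =
      Pi.single (Fin.last i) (2 * y (Fin.last i)) := by
    ext a
    refine Fin.lastCases ?_ (fun a => ?_) a
    · simp [B, B', two_mul]
    · simp [B, B', weightedVandermonde, updateRow_apply, Fin.castSucc_ne_last]
  have hminor : B.submatrix Fin.castSucc Fin.castSucc =
      (vandermonde fun s : Fin i => lam s.castSucc)ᵀ := by
    ext a s
    simp [B, weightedVandermonde, updateRow_apply, Fin.castSucc_ne_last, vandermonde_apply]
  calc B.det + B'.det
      = (B.updateCol (Fin.last i) (Pi.single (Fin.last i) (2 * y (Fin.last i)))).det := by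
        rw [← hcol, det_updateCol_add, ← hB', hself]
    _ = _ := by
        rw [← cramer_apply, cramer_eq_adjugate_mulVec, mulVec_single]
        simp [adjugate_fin_succ_eq_det_submatrix, hminor, mul_comm]

variable [Fintype ι]

/-- The determinant of the pairings of `f₀, …, f_{i-1}, y` with `f₀, …, f_i`, where `f` is the
Krylov sequence of `w` under `diagonal lam`. Up to a nonzero factor it is the pairing of `y` with
the `i`-th Gram–Schmidt vector of `f` and, unlike that vector, it is polynomial in `w`. -/
def krylovPairingDet (i : ℕ) (lam w y : ι → R) : R :=
  ((weightedVandermonde (i + 1) lam w).updateRow (Fin.last i) y *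
    (weightedVandermonde (i + 1) lam w)ᵀ).det

lemma map_krylovPairingDet {S : Type*} [CommRing S] (φ : R →+* S) (i : ℕ) (lam w y : ι → R) :
    φ (krylovPairingDet i lam w y) = krylovPairingDet i (φ ∘ lam) (φ ∘ w) (φ ∘ y) := by
  have hmap : (weightedVandermonde (i + 1) lam w).map φ =
      weightedVandermonde (i + 1) (φ ∘ lam) (φ ∘ w) := by
    ext
    simp [weightedVandermonde]
  rw [krylovPairingDet, RingHom.map_det, RingHom.mapMatrix_apply, Matrix.map_mul, map_updateRow,
    transpose_map, hmap, krylovPairingDet]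

lemma krylovPairingDet_eq_of_injective {i : ℕ} {e : Fin (i + 1) → ι} (he : Function.Injective e)
    (lam y : ι → R) {w : ι → R} (hw : ∀ k ∉ Set.range e, w k = 0) :
    krylovPairingDet i lam w y =
      ((weightedVandermonde (i + 1) (lam ∘ e) (w ∘ e)).updateRow (Fin.last i) (y ∘ e)).det *
        (weightedVandermonde (i + 1) (lam ∘ e) (w ∘ e)).det := by
  rw [krylovPairingDet, ← det_transpose (weightedVandermonde (i + 1) (lam ∘ e) (w ∘ e)), ← det_mul]
  congr 1
  ext a b
  refine (Fintype.sum_of_injective e he _ _ (fun k hk => ?_) fun s => ?_).symm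
  · simp [weightedVandermonde, hw k hk]
  · simp [weightedVandermonde, updateRow_apply]

lemma exists_krylovPairingDet_ne_zero [IsDomain R] [NeZero (2 : R)] {lam : ι → R}
    (hlam : Function.Injective lam) {i : ℕ} (hi : i < Fintype.card ι) {y : ι → R} (hy : y ≠ 0) :
    ∃ w : ι → R, krylovPairingDet i lam w y ≠ 0 := by
  classical
  obtain ⟨k, hk⟩ := Function.ne_iff.1 hy
  obtain ⟨e, he, hek⟩ : ∃ e : Fin (i + 1) → ι, Function.Injective e ∧ e (Fin.last i) = k := by
    obtain ⟨e⟩ : Nonempty (Fin (i + 1) ↪ ι) :=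
      Function.Embedding.nonempty_of_card_le (by simpa using hi)
    exact ⟨Equiv.swap (e (Fin.last i)) k ∘ e, (Equiv.injective _).comp e.injective, by simp⟩
  suffices h : ∃ v : Fin (i + 1) → R, (∏ s, v s) ≠ 0 ∧
      ((weightedVandermonde (i + 1) (lam ∘ e) v).updateRow (Fin.last i) (y ∘ e)).det ≠ 0 by
    obtain ⟨v, hv, hdet⟩ := h
    refine ⟨Function.extend e v 0, ?_⟩
    rw [krylovPairingDet_eq_of_injective he _ _ (Function.extend_apply' v (0 : ι → R)),
      Function.extend_comp he, det_weightedVandermonde]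
    exact mul_ne_zero hdet (mul_ne_zero (det_vandermonde_ne_zero_iff.2 (hlam.comp he)) hv)
  by_contra! h
  have hlast : (y ∘ e) (Fin.last i) ≠ 0 := by rwa [Function.comp_apply, hek]
  refine mul_ne_zero (mul_ne_zero two_ne_zero hlast)
    (det_vandermonde_ne_zero_iff.2 ((hlam.comp he).comp (Fin.castSucc_injective i))) ?_
  refine (det_weightedVandermonde_updateRow_add (lam ∘ e) (y ∘ e)).symm.trans ?_
  rw [h 1 (by simp), h _ (by simp [Finset.prod_update_of_mem]), add_zero]

lemma exists_forall_eval_ne_zero [IsDomain R] [Infinite R] {σ κ : Type*} (s : Finset κ)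
    {p : κ → MvPolynomial σ R} (hp : ∀ a ∈ s, p a ≠ 0) :
    ∃ x : σ → R, ∀ a ∈ s, MvPolynomial.eval x (p a) ≠ 0 := by
  have hprod : ∏ a ∈ s, p a ≠ 0 := Finset.prod_ne_zero_iff.2 hp
  contrapose! hprod
  refine MvPolynomial.funext fun x => ?_
  obtain ⟨a, ha, hx⟩ := hprod x
  rw [map_prod, map_zero, Finset.prod_eq_zero ha hx]

lemma exists_forall_krylovPairingDet_ne_zero [IsDomain R] [Infinite R] [NeZero (2 : R)]
    {lam : ι → R} (hlam : Function.Injective lam) (Y : Finset (ι → R)) (hY : ∀ y ∈ Y, y ≠ 0) :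
    ∃ w : ι → R, ∀ y ∈ Y, ∀ i < Fintype.card ι, krylovPairingDet i lam w y ≠ 0 := by
  let p : (ι → R) × ℕ → MvPolynomial ι R := fun q =>
    krylovPairingDet q.2 (MvPolynomial.C ∘ lam) MvPolynomial.X (MvPolynomial.C ∘ q.1)
  have heval : ∀ w q, MvPolynomial.eval w (p q) = krylovPairingDet q.2 lam w q.1 := by
    intro w q
    rw [map_krylovPairingDet]
    congr 1 <;> ext k <;> simp
  have hp : ∀ q ∈ Y ×ˢ Finset.range (Fintype.card ι), p q ≠ 0 := by
    intro q hq hpq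
    obtain ⟨hqY, hqi⟩ := Finset.mem_product.1 hq
    obtain ⟨w, hw⟩ :=
      exists_krylovPairingDet_ne_zero hlam (Finset.mem_range.1 hqi) (hY _ hqY)
    exact hw (by rw [← heval, hpq, map_zero])
  obtain ⟨w, hw⟩ := exists_forall_eval_ne_zero _ hp
  refine ⟨w, fun y hy i hi => ?_⟩
  rw [← heval w (y, i)]
  exact hw (y, i) (Finset.mk_mem_product hy (Finset.mem_range.2 hi))

end Genericity

section DiagonalLanczos

variable {ι : Type*} [Fintype ι] [DecidableEq ι]

lemma ofLp_krylov_diagonal (lam w : ι → ℝ) (a : ℕ) (k : ι) :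
    (krylov (toEuclideanLin (diagonal lam)) (WithLp.toLp 2 w) a).ofLp k = lam k ^ a * w k := by
  induction a with
  | zero => simp [krylov]
  | succ a ih =>
    rw [← map_krylov, ofLp_toLpLin, toLin'_apply, mulVec_diagonal, ih, pow_succ', mul_assoc]

lemma inner_lanczosVector_diagonal_ne_zero {lam w y : ι → ℝ} {i : ℕ}
    (h : krylovPairingDet i lam w y ≠ 0) :
    inner ℝ (WithLp.toLp 2 y)
      (lanczosVector (toEuclideanLin (diagonal lam)) (WithLp.toLp 2 w) i) ≠ 0 := by
  set f := krylov (toEuclideanLin (diagonal lam)) (WithLp.toLp 2 w)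
  have hrow (a : Fin (i + 1)) :
      (f a).ofLp = weightedVandermonde (i + 1) lam w a :=
    funext fun k => ofLp_krylov_diagonal lam w a k
  have hupdate (a : Fin (i + 1)) : (Function.update f i (WithLp.toLp 2 y) a).ofLp =
      (weightedVandermonde (i + 1) lam w).updateRow (Fin.last i) y a := by
    rcases eq_or_ne a (Fin.last i) with rfl | ha
    · rw [Fin.val_last, Function.update_self, updateRow_self]
    · have hai : a.val ≠ i := Fin.val_ne_of_ne ha
      rw [Function.update_of_ne hai, updateRow_ne ha, hrow]
  refine inner_gramSchmidt_ne_zero_of_det_ne_zero ?_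
  have hgram : of (fun a b : Fin (i + 1) =>
      inner ℝ (Function.update f i (WithLp.toLp 2 y) a) (f b)) =
      (weightedVandermonde (i + 1) lam w).updateRow (Fin.last i) y *
        (weightedVandermonde (i + 1) lam w)ᵀ := by
    ext a b
    rw [of_apply, EuclideanSpace.inner_eq_star_dotProduct, star_trivial, hupdate, hrow,
      dotProduct_comm]
    rfl
  rwa [hgram]

end DiagonalLanczos

/-- Corollary 2.6(1): the path `P_n` is generically realisable: any matrix
in `S(P_n)` has maximum eigenvalue multiplicity `1`, and every list of `n` distinct
eigenvalues is generically realisable for `P_n`. -/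
theorem statement5 (n : ℕ) (hn : 1 ≤ n) :
    (∀ A : Matrix (Fin n) (Fin n) ℝ, inS (SimpleGraph.pathGraph n) A →
      ∀ μ : ℝ, Multiset.count μ (specMultiset A) ≤ 1) ∧
    (∀ lam : Fin n → ℝ, StrictMono lam →
      ∀ Y : Finset (Fin n → ℝ), (∀ y ∈ Y, y ≠ 0) →
        ∃ A U : Matrix (Fin n) (Fin n) ℝ,
          inS (SimpleGraph.pathGraph n) A ∧
          specMultiset A = Finset.univ.val.map lam ∧
          Uᵀ * U = 1 ∧ Uᵀ * A * U = Matrix.diagonal lam ∧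
          ∀ y ∈ Y, ∀ i, U.mulVec y i ≠ 0) := by
  classical
  refine ⟨fun A hA => Multiset.nodup_iff_count_le_one.1 (nodup_specMultiset_of_inS_pathGraph hA),
    fun lam hlam Y hY => ?_⟩
  have : NeZero n := ⟨Nat.one_le_iff_ne_zero.1 hn⟩
  obtain ⟨w, hw⟩ := exists_forall_krylovPairingDet_ne_zero hlam.injective (insert 1 Y)
    ((Finset.forall_mem_insert _ _ _).2 ⟨one_ne_zero, hY⟩)
  have hinner (y) (hy : y ∈ insert 1 Y) (i) (hi : i < n) :
      inner ℝ (WithLp.toLp 2 y)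
        (lanczosVector (toEuclideanLin (diagonal lam)) (WithLp.toLp 2 w) i) ≠ 0 :=
    inner_lanczosVector_diagonal_ne_zero (hw y hy i (by simpa using hi))
  have hne (i) (hi : i < n) :
      lanczosVector (toEuclideanLin (diagonal lam)) (WithLp.toLp 2 w) i ≠ 0 :=
    fun h => hinner 1 (Finset.mem_insert_self _ _) i hi (by rw [h, inner_zero_right])
  set U := lanczosMatrix n (diagonal lam) (WithLp.toLp 2 w)
  have hU : Uᵀ * U = 1 := mul_eq_one_comm.1 (lanczosMatrix_mul_transpose_self hne)
  refine ⟨U * diagonal lam * Uᵀ, U, inS_pathGraph_lanczosMatrix (isSymm_diagonal lam) hne,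
    specMultiset_mul_diagonal_mul_transpose hU lam, hU, ?_, fun y hy i => ?_⟩
  · rw [Matrix.mul_assoc, Matrix.mul_assoc, hU, Matrix.mul_one, ← Matrix.mul_assoc, hU,
      Matrix.one_mul]
  · rw [lanczosMatrix_mulVec_apply]
    exact mul_ne_zero (inv_ne_zero (norm_ne_zero_iff.2 (hne i i.2)))
      (hinner y (Finset.mem_insert_of_mem hy) i i.2)
end
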